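/- arXiv:1708.06055 — 7 statements merged into one kernel-verified Lean document; each statement's English description precedes it below -/
import Mathlib

section
/- Let p > 1 and N ≥ m. Suppose A ∈ ℝ^{m×N} is such that every m×m submatrix of A is invertible, and y ∈ ℝ^m is nonzero. Then the unique optimal solution x* of the generalized basis pursuit problem min ‖x‖_p subject to Ax = y satisfies |supp(x*)| ≥ N − m + 1. -/
/-!
If `x'` had at most `N - m` nonzero entries, it would vanish on the image of an injection
`g : Fin m → Fin N`. The corresponding submatrix is invertible, so there is a feasible `v`
supported on that image, disjointly from `x'`. For `0 < t < 1` the point `(1 - t) x' + t v` is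
feasible and, by disjointness of the supports, the `p`-th power of its norm is
`(1 - t) ^ p * a + t ^ p * b ≤ (1 - t) * a + t ^ p * b`, where `a = ∑ |x' i| ^ p > 0` and
`b = ∑ |v i| ^ p`. As `p > 1`, the term `t ^ p * b` is smaller than `t * a` once `t` is small,
which contradicts optimality (`exists_convex_combination_lt`).
-/

open scoped BigOperators

/-- The `p`-norm (quasi-norm for `0 < p < 1`) on `ℝ^N`. -/
noncomputable def pnorm {N : ℕ} (p : ℝ) (x : Fin N → ℝ) : ℝ :=
  (∑ i, |x i| ^ p) ^ (1 / p)

/-- Matrix-vector multiplication `A x` for `A ∈ ℝ^{m×N}`, `x ∈ ℝ^N`. -/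
def mulVec' {m N : ℕ} (A : Fin m → Fin N → ℝ) (x : Fin N → ℝ) : Fin m → ℝ :=
  fun i => ∑ j, A i j * x j

/-- The number of nonzero entries of `x ∈ ℝ^N`, i.e. `|supp(x)|`. -/
noncomputable def suppCard {N : ℕ} (x : Fin N → ℝ) : ℕ :=
  (Finset.univ.filter fun i => x i ≠ 0).card

/-- Moving slightly from a nonzero mass `a` towards a disjointly supported mass `b` decreases the
`p`-th power sum, because `t ^ p = o(t)` at `0`. -/
lemma exists_convex_combination_lt {p a : ℝ} (hp : 1 < p) (ha : 0 < a) (b : ℝ) :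
    ∃ t : ℝ, 0 < t ∧ t < 1 ∧ (1 - t) ^ p * a + t ^ p * b < a := by
  have hc : ContinuousAt (fun t : ℝ => t ^ (p - 1) * b) 0 :=
    (Real.continuousAt_rpow_const 0 (p - 1) (Or.inr (by linarith))).mul continuousAt_const
  have h0 : (0 : ℝ) ^ (p - 1) * b < a := by
    rw [Real.zero_rpow (by linarith), zero_mul]
    exact ha
  have hev : ∀ᶠ t : ℝ in nhds 0, t ^ (p - 1) * b < a := hc.eventually_lt continuousAt_const h0
  obtain ⟨ε, hε, hball⟩ := Metric.eventually_nhds_iff.mp hev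
  have ht0 : 0 < min (ε / 2) (1 / 2) := by positivity
  have ht1 : min (ε / 2) (1 / 2) ≤ 1 / 2 := min_le_right _ _
  have htε : min (ε / 2) (1 / 2) ≤ ε / 2 := min_le_left _ _
  generalize min (ε / 2) (1 / 2) = t at ht0 ht1 htε
  have hlt : t ^ (p - 1) * b < a := by
    apply hball
    rw [Real.dist_eq, sub_zero, abs_of_pos ht0]
    linarith
  have hsplit : t ^ p = t * t ^ (p - 1) := by
    rw [Real.rpow_sub_one ht0.ne']
    field_simp
  have hle : (1 - t) ^ p ≤ 1 - t := by
    calc (1 - t) ^ p ≤ (1 - t) ^ (1 : ℝ) :=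
          Real.rpow_le_rpow_of_exponent_ge (by linarith) (by linarith) hp.le
      _ = 1 - t := Real.rpow_one _
  refine ⟨t, ht0, by linarith, ?_⟩
  rw [hsplit]
  nlinarith [mul_le_mul_of_nonneg_right hle ha.le, mul_lt_mul_of_pos_left hlt ht0]

/-- A vector with at most `N - m` nonzero entries vanishes on `m` distinct coordinates. -/
lemma exists_injective_zeros {m N : ℕ} (hmN : m ≤ N) (x : Fin N → ℝ)
    (h : suppCard x ≤ N - m) :
    ∃ g : Fin m → Fin N, Function.Injective g ∧ ∀ k, x (g k) = 0 := by
  classical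
  have hsum := Finset.card_filter_add_card_filter_not
    (s := (Finset.univ : Finset (Fin N))) (fun i => x i ≠ 0)
  rw [Finset.card_univ, Fintype.card_fin] at hsum
  have hcard : m ≤ (Finset.univ.filter fun i => ¬ x i ≠ 0).card := by
    unfold suppCard at h
    omega
  obtain ⟨s, hs, hsm⟩ := Finset.exists_subset_card_eq hcard
  refine ⟨s.orderEmbOfFin hsm, (s.orderEmbOfFin hsm).injective, fun k => ?_⟩
  have hk := hs (s.orderEmbOfFin_mem hsm k)
  simpa using hk

/-- If the columns of `A` selected by `g` form an invertible matrix, then `A v = y` has a solution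
supported on the image of `g`. -/
lemma exists_feasible_supported {m N : ℕ} (A : Fin m → Fin N → ℝ) (y : Fin m → ℝ)
    {g : Fin m → Fin N} (hg : Function.Injective g)
    (hdet : (Matrix.of fun i k => A i (g k)).det ≠ 0) :
    ∃ v : Fin N → ℝ, mulVec' A v = y ∧ ∀ j, j ∉ Set.range g → v j = 0 := by
  set B : Matrix (Fin m) (Fin m) ℝ := Matrix.of fun i k => A i (g k)
  have hBc : B.mulVec (B⁻¹.mulVec y) = y := by
    rw [Matrix.mulVec_mulVec, Matrix.mul_nonsing_inv _ (isUnit_iff_ne_zero.mpr hdet),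
      Matrix.one_mulVec]
  have hzero : ∀ j, j ∉ Set.range g → Function.extend g (B⁻¹.mulVec y) 0 j = 0 :=
    fun j hj => Function.extend_apply' _ _ _ hj
  refine ⟨Function.extend g (B⁻¹.mulVec y) 0, ?_, hzero⟩
  rw [← hBc]
  funext i
  symm
  refine Fintype.sum_of_injective g hg _ _ (fun j hj => ?_) (fun k => ?_)
  · rw [hBc, hzero j hj, mul_zero]
  · rw [hBc, hg.extend_apply]
    rfl

/-- The `p`-th power sum of a combination of disjointly supported vectors splits. -/
lemma sum_abs_rpow_of_disjoint {N : ℕ} {p s t : ℝ} (hp : 0 < p) (hs : 0 ≤ s) (ht : 0 ≤ t)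
    {x v : Fin N → ℝ} (h : ∀ i, x i = 0 ∨ v i = 0) :
    ∑ i, |s * x i + t * v i| ^ p = s ^ p * ∑ i, |x i| ^ p + t ^ p * ∑ i, |v i| ^ p := by
  rw [Finset.mul_sum, Finset.mul_sum, ← Finset.sum_add_distrib]
  refine Finset.sum_congr rfl fun i _ => ?_
  rcases h i with h | h
  · simp [h, Real.zero_rpow hp.ne', abs_mul, abs_of_nonneg ht, Real.mul_rpow ht (abs_nonneg _)]
  · simp [h, Real.zero_rpow hp.ne', abs_mul, abs_of_nonneg hs, Real.mul_rpow hs (abs_nonneg _)]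

/-- Sparsity lower bound for generalized basis pursuit with `p > 1`: if every `m×m`
submatrix of `A` is invertible and `y ≠ 0`, then any optimal solution of
`min ‖x‖_p  s.t.  Ax = y` has at least `N - m + 1` nonzero entries. -/
theorem sparsity_lower_bound_BP {m N : ℕ} (hmN : m ≤ N) (p : ℝ) (hp : 1 < p)
    (A : Fin m → Fin N → ℝ)
    (hA : ∀ g : Fin m → Fin N, Function.Injective g →
      (Matrix.of fun i k => A i (g k)).det ≠ 0)
    (y : Fin m → ℝ) (hy : y ≠ 0)
    (x' : Fin N → ℝ)
    (hopt : mulVec' A x' = y ∧ ∀ x, mulVec' A x = y → pnorm p x' ≤ pnorm p x) :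
    N - m + 1 ≤ suppCard x' := by
  by_contra hcon
  obtain ⟨hfeas, hmin⟩ := hopt
  obtain ⟨g, hg, hxg⟩ := exists_injective_zeros hmN x' (by omega)
  obtain ⟨v, hv, hvg⟩ := exists_feasible_supported A y hg (hA g hg)
  have hdisj : ∀ i, x' i = 0 ∨ v i = 0 := fun i => by
    by_cases hi : i ∈ Set.range g
    · obtain ⟨k, rfl⟩ := hi
      exact Or.inl (hxg k)
    · exact Or.inr (hvg i hi)
  have ha : 0 < ∑ i, |x' i| ^ p := by
    obtain ⟨i, hi⟩ : ∃ i, x' i ≠ 0 := by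
      by_contra! hall
      apply hy
      rw [← hfeas]
      funext i
      simp [mulVec', hall]
    exact Finset.sum_pos' (fun j _ => by positivity)
      ⟨i, Finset.mem_univ i, Real.rpow_pos_of_pos (abs_pos.mpr hi) p⟩
  obtain ⟨t, ht0, ht1, hlt⟩ := exists_convex_combination_lt hp ha (∑ i, |v i| ^ p)
  have hw : mulVec' A (fun i => (1 - t) * x' i + t * v i) = y := by
    funext i
    have h1 : ∑ j, A i j * x' j = y i := congrFun hfeas i
    have h2 : ∑ j, A i j * v j = y i := congrFun hv i
    calc ∑ j, A i j * ((1 - t) * x' j + t * v j)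
        = (1 - t) * ∑ j, A i j * x' j + t * ∑ j, A i j * v j := by
          rw [Finset.mul_sum, Finset.mul_sum, ← Finset.sum_add_distrib]
          exact Finset.sum_congr rfl fun j _ => by ring
      _ = y i := by rw [h1, h2]; ring
  rw [← sum_abs_rpow_of_disjoint (by linarith) (by linarith) ht0.le hdisj] at hlt
  refine (hmin _ hw).not_gt ?_
  exact Real.rpow_lt_rpow (Finset.sum_nonneg fun j _ => by positivity) hlt (by positivity)
end

section
/- Let p > 1 and N ≥ m. Suppose A ∈ ℝ^{m×N} is such that every m×m submatrix of A is invertible, y ∈ ℝ^m is nonzero, and 0 < ε < ‖y‖₂. Then the unique optimal solution x* of the generalized basis pursuit denoising problem min ‖x‖_p subject to ‖Ax − y‖₂ ≤ ε satisfies |supp(x*)| ≥ N − m + 1. -/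
/-!
If `x'` had at most `N - m` nonzero entries, it would vanish on `m` coordinates, given by an
injection `g`. As `ε < ‖y‖₂`, the zero vector is infeasible, so some `x' j₀ ≠ 0`. The columns of `A`
indexed by `g` form an invertible matrix, so the column `j₀` is a combination of them; this gives
`w ∈ ker A` with `w j₀ = -x' j₀` that is otherwise supported on the zeros of `x'`
(`exists_kernel_direction`). Each `x' + s w` is feasible, and for `0 < s < 1` moving there lowers
`∑ |x'_i| ^ p` by at least `s |x' j₀| ^ p` at `j₀` and raises it by at most `s ^ p ∑ |w_i| ^ p`
elsewhere. Since `p > 1`, the loss is of smaller order than the gain as `s → 0⁺`, which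
contradicts optimality.
-/

open scoped BigOperators

/-- The Euclidean norm on `ℝ^m`. -/
noncomputable def norm2 {m : ℕ} (v : Fin m → ℝ) : ℝ :=
  Real.sqrt (∑ i, v i ^ 2)

/-- A kernel vector of `A` that points from `x` towards zero in the coordinate `j₀` and is otherwise
supported on zeros of `x`. -/
lemma exists_kernel_direction {m N : ℕ} (A : Fin m → Fin N → ℝ) (g : Fin m → Fin N)
    (hdet : (Matrix.of fun i k => A i (g k)).det ≠ 0) (x : Fin N → ℝ) (hg : ∀ k, x (g k) = 0)
    (j₀ : Fin N) (hj : x j₀ ≠ 0) :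
    ∃ w : Fin N → ℝ, mulVec' A w = 0 ∧ w j₀ = -x j₀ ∧ ∀ i, i ≠ j₀ → w i = 0 ∨ x i = 0 := by
  set B : Matrix (Fin m) (Fin m) ℝ := Matrix.of fun i k => A i (g k) with hB
  set v : Fin m → ℝ := B⁻¹.mulVec fun i => A i j₀ * x j₀ with hv
  have hBv : B.mulVec v = fun i => A i j₀ * x j₀ := by
    rw [hv, Matrix.mulVec_mulVec, Matrix.mul_nonsing_inv _ (isUnit_iff_ne_zero.mpr hdet),
      Matrix.one_mulVec]
  refine ⟨fun j => (∑ k, if g k = j then v k else 0) - if j = j₀ then x j₀ else 0, ?_, ?_, ?_⟩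
  · funext i
    have h := congrFun hBv i
    simp only [Matrix.mulVec, dotProduct, hB, Matrix.of_apply] at h
    simp only [mulVec', mul_sub, Finset.mul_sum, Finset.sum_sub_distrib, Pi.zero_apply]
    rw [Finset.sum_comm]
    simp [h]
  · have h : ∀ k, g k ≠ j₀ := fun k hk => hj (hk ▸ hg k)
    simp [h]
  · intro i hi
    by_cases h : ∃ k, g k = i
    · obtain ⟨k, rfl⟩ := h
      exact Or.inr (hg k)
    · push Not at h
      left
      simp [h, hi]

lemma sum_rpow_le_of_pnorm_le {N : ℕ} {p : ℝ} (hp : 0 < p) {x z : Fin N → ℝ}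
    (h : pnorm p x ≤ pnorm p z) : ∑ i, |x i| ^ p ≤ ∑ i, |z i| ^ p :=
  (Real.rpow_le_rpow_iff (Finset.sum_nonneg fun _ _ => Real.rpow_nonneg (abs_nonneg _) _)
    (Finset.sum_nonneg fun _ _ => Real.rpow_nonneg (abs_nonneg _) _) (by positivity)).1 h

/-- Effect on the `p`-th power sum of moving a step `s` along a direction `w` as provided by
`exists_kernel_direction`. -/
lemma sum_rpow_add_smul_le {N : ℕ} {p : ℝ} (hp : 1 < p) (x w : Fin N → ℝ) (j₀ : Fin N)
    (hw : w j₀ = -x j₀) (hi : ∀ i, i ≠ j₀ → w i = 0 ∨ x i = 0) {s : ℝ} (hs0 : 0 < s)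
    (hs1 : s < 1) :
    ∑ i, |x i + s * w i| ^ p ≤
      ∑ i, |x i| ^ p + s ^ p * ∑ i, |w i| ^ p - s * |x j₀| ^ p := by
  have key : ∀ i, |x i + s * w i| ^ p ≤
      |x i| ^ p + s ^ p * |w i| ^ p - if i = j₀ then s * |x j₀| ^ p else 0 := by
    intro i
    have hw0 : 0 ≤ s ^ p * |w i| ^ p := by positivity
    have hx0 : 0 ≤ |x i| ^ p := by positivity
    by_cases h : i = j₀
    · subst h
      have h1 : (1 - s) ^ p ≤ 1 - s := by
        simpa using Real.rpow_le_rpow_of_exponent_ge (by linarith : 0 < 1 - s) (by linarith) hp.le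
      have h2 : |x i + s * w i| = (1 - s) * |x i| := by
        rw [hw, show x i + s * -x i = (1 - s) * x i by ring, abs_mul,
          abs_of_pos (by linarith : 0 < 1 - s)]
      rw [h2, Real.mul_rpow (by linarith) (abs_nonneg _)]
      simp only [if_true]
      nlinarith
    · simp only [h, if_false, sub_zero]
      rcases hi i h with h0 | h0
      · simpa [h0] using hw0
      · rw [h0, zero_add, abs_mul, abs_of_pos hs0, Real.mul_rpow hs0.le (abs_nonneg _)]
        rw [h0] at hx0
        linarith
  refine (Finset.sum_le_sum fun i _ => key i).trans_eq ?_
  simp [Finset.sum_add_distrib, Finset.sum_sub_distrib, Finset.mul_sum]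

/-- Sparsity lower bound for generalized basis pursuit denoising with `p > 1`: if every
`m×m` submatrix of `A` is invertible, `y ≠ 0`, and `0 < ε < ‖y‖₂`, then any optimal
solution of `min ‖x‖_p  s.t.  ‖Ax − y‖₂ ≤ ε` has at least `N - m + 1` nonzero entries. -/
theorem sparsity_lower_bound_BPDN {m N : ℕ} (hmN : m ≤ N) (p : ℝ) (hp : 1 < p)
    (A : Fin m → Fin N → ℝ)
    (hA : ∀ g : Fin m → Fin N, Function.Injective g →
      (Matrix.of fun i k => A i (g k)).det ≠ 0)
    (y : Fin m → ℝ) (hy : y ≠ 0)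
    (ε : ℝ) (hε : 0 < ε) (hεy : ε < norm2 y)
    (x' : Fin N → ℝ)
    (hopt : norm2 (mulVec' A x' - y) ≤ ε ∧
      ∀ x, norm2 (mulVec' A x - y) ≤ ε → pnorm p x' ≤ pnorm p x) :
    N - m + 1 ≤ suppCard x' := by
  obtain ⟨hfeas, hmin⟩ := hopt
  by_contra hcard
  obtain ⟨j₀, hj⟩ : ∃ j, x' j ≠ 0 := by
    by_contra! h
    have h0 : norm2 (mulVec' A x' - y) = norm2 y := by
      simp [norm2, mulVec', h]
    linarith
  have hz : m ≤ Fintype.card {i // x' i = 0} := by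
    have h := Finset.card_filter_add_card_filter_not (s := (Finset.univ : Finset (Fin N)))
      (fun i => x' i = 0)
    rw [Fintype.card_subtype]
    simp only [suppCard, ne_eq] at hcard
    simp only [Finset.card_univ, Fintype.card_fin] at h
    omega
  obtain ⟨e⟩ : Nonempty (Fin m ↪ {i // x' i = 0}) :=
    Function.Embedding.nonempty_of_card_le (by simpa using hz)
  obtain ⟨w, hAw, hwj, hwi⟩ := exists_kernel_direction A (fun k => (e k : Fin N))
    (hA _ (Subtype.val_injective.comp e.injective)) x' (fun k => (e k).2) j₀ hj
  set C := ∑ i, |w i| ^ p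
  have hD : 0 < |x' j₀| ^ p := Real.rpow_pos_of_pos (abs_pos.mpr hj) _
  -- Optimality, divided by the step size.
  have hstep : ∀ s : ℝ, 0 < s → s < 1 → |x' j₀| ^ p ≤ s ^ (p - 1) * C := by
    intro s hs0 hs1
    have hA' : mulVec' A (fun i => x' i + s * w i) = mulVec' A x' := by
      funext i
      have h := congrFun hAw i
      simp only [mulVec', Pi.zero_apply] at h
      simp only [mulVec', mul_add, Finset.sum_add_distrib, mul_left_comm _ s, ← Finset.mul_sum, h,
        mul_zero, add_zero]
    have h1 := sum_rpow_le_of_pnorm_le (by linarith)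
      (hmin (fun i => x' i + s * w i) (by rw [hA']; exact hfeas))
    have h2 := sum_rpow_add_smul_le hp x' w j₀ hwj hwi hs0 hs1
    have h3 : s ^ p = s * s ^ (p - 1) := by
      rw [Real.rpow_sub_one hs0.ne']
      field_simp
    rw [h3] at h2
    refine le_of_mul_le_mul_left ?_ hs0
    linarith
  have hlim : Filter.Tendsto (fun s : ℝ => s ^ (p - 1) * C) (nhdsWithin 0 (Set.Ioi 0))
      (nhds 0) := by
    have h := (Real.continuousAt_rpow_const 0 (p - 1) (Or.inr (by linarith))).tendsto.mul_const C
    rw [Real.zero_rpow (by linarith), zero_mul] at h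
    exact h.mono_left nhdsWithin_le_nhds
  refine hD.not_ge (ge_of_tendsto hlim ?_)
  filter_upwards [Ioo_mem_nhdsGT (zero_lt_one' ℝ)] with s hs
  exact hstep s hs.1 hs.2
end

section
/- Let p > 1, N ≥ m, and λ > 0. Suppose A ∈ ℝ^{m×N} is such that every m×m submatrix of A is invertible, and y ∈ ℝ^m is nonzero. Then the unique optimal solution x* of the generalized ridge regression problem min (1/2)‖Ax − y‖₂² + λ‖x‖_p^p satisfies |supp(x*)| ≥ N − m + 1. -/
/-!
The objective is differentiable because `p > 1`, so a minimizer `x'` with residual `r = A x' - y`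
satisfies the stationarity equations `⟪r, A_j⟫ + λ p |x'_j| ^ (p - 2) x'_j = 0` for each column
`A_j` (`stationarity`). If `x'` had at least `m` zero entries, `r` would be orthogonal to `m`
linearly independent columns, hence `r = 0`. The stationarity equations then force every entry of
`x'` to vanish, so `y = A x' - r = 0`, a contradiction.
-/

open scoped BigOperators

/-- First-order optimality condition for the ridge objective in the `j`-th coordinate. -/
theorem stationarity {m N : ℕ} (p : ℝ) (hp : 1 < p) (lam : ℝ)
    (A : Fin m → Fin N → ℝ) (y : Fin m → ℝ) (x' : Fin N → ℝ)
    (hopt : ∀ x,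
      (1 / 2) * norm2 (mulVec' A x' - y) ^ 2 + lam * ∑ i, |x' i| ^ p ≤
        (1 / 2) * norm2 (mulVec' A x - y) ^ 2 + lam * ∑ i, |x i| ^ p) (j : Fin N) :
    ∑ i, (mulVec' A x' i - y i) * A i j + lam * (p * |x' j| ^ (p - 2) * x' j) = 0 := by
  have hsq (v : Fin m → ℝ) : norm2 v ^ 2 = ∑ i, v i ^ 2 :=
    Real.sq_sqrt (Finset.sum_nonneg fun i _ => sq_nonneg _)
  simp only [hsq] at hopt
  have hmul (t : ℝ) (i : Fin m) :
      mulVec' A (fun k => x' k + t * (Pi.single j 1 : Fin N → ℝ) k) i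
        = mulVec' A x' i + t * A i j := by
    simp only [mulVec', mul_add, Finset.sum_add_distrib, Pi.single_apply]
    simp [mul_comm]
  let F : ℝ → ℝ := fun t => (1 / 2) * ∑ i, ((mulVec' A x' i + t * A i j) - y i) ^ 2
    + lam * ∑ k, |x' k + t * (Pi.single j 1 : Fin N → ℝ) k| ^ p
  have hmin : IsLocalMin F 0 := by
    refine Filter.Eventually.of_forall fun t => ?_
    have h := hopt (fun k => x' k + t * (Pi.single j 1 : Fin N → ℝ) k)
    simp only [Pi.sub_apply, hmul] at h
    simpa [F] using h
  have h1 (i : Fin m) : HasDerivAt (fun t : ℝ => ((mulVec' A x' i + t * A i j) - y i) ^ 2)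
      (2 * ((mulVec' A x' i - y i) * A i j)) 0 := by
    have h := ((((hasDerivAt_id (0 : ℝ)).mul_const (A i j)).const_add
      (mulVec' A x' i)).sub_const (y i)).pow 2
    refine h.congr_deriv ?_
    simp
    ring
  have h2 (k : Fin N) :
      HasDerivAt (fun t : ℝ => |x' k + t * (Pi.single j 1 : Fin N → ℝ) k| ^ p)
      (p * |x' k| ^ (p - 2) * x' k * (Pi.single j 1 : Fin N → ℝ) k) 0 := by
    have h := ((hasDerivAt_id (0 : ℝ)).mul_const ((Pi.single j 1 : Fin N → ℝ) k)).const_add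
      (x' k)
    have h3 := (hasDerivAt_abs_rpow (x' k + id 0 * (Pi.single j 1 : Fin N → ℝ) k) hp).comp 0 h
    refine h3.congr_deriv ?_
    simp
  have hF := ((HasDerivAt.fun_sum (u := Finset.univ) fun i _ => h1 i).const_mul (1 / 2)).add
    ((HasDerivAt.fun_sum (u := Finset.univ) fun k _ => h2 k).const_mul lam)
  have h0 := hmin.hasDerivAt_eq_zero hF
  rw [← Finset.mul_sum] at h0
  simp only [Pi.single_apply, mul_ite, mul_one, mul_zero, Finset.sum_ite_eq',
    Finset.mem_univ, if_true] at h0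
  linarith

/-- Sparsity lower bound for generalized ridge regression with `p > 1`: if every `m×m`
submatrix of `A` is invertible and `y ≠ 0`, then any optimal solution of
`min (1/2)‖Ax − y‖₂² + λ‖x‖_p^p` has at least `N - m + 1` nonzero entries. -/
theorem sparsity_lower_bound_RR {m N : ℕ} (hmN : m ≤ N) (p : ℝ) (hp : 1 < p)
    (lam : ℝ) (hlam : 0 < lam)
    (A : Fin m → Fin N → ℝ)
    (hA : ∀ g : Fin m → Fin N, Function.Injective g →
      (Matrix.of fun i k => A i (g k)).det ≠ 0)
    (y : Fin m → ℝ) (hy : y ≠ 0)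
    (x' : Fin N → ℝ)
    (hopt : ∀ x,
      (1 / 2) * norm2 (mulVec' A x' - y) ^ 2 + lam * ∑ i, |x' i| ^ p ≤
        (1 / 2) * norm2 (mulVec' A x - y) ^ 2 + lam * ∑ i, |x i| ^ p) :
    N - m + 1 ≤ suppCard x' := by
  have hstat := stationarity p hp lam A y x' hopt
  by_contra hcon
  have hzero : m ≤ (Finset.univ.filter fun i => x' i = 0).card := by
    have h := Finset.card_filter_add_card_filter_not (s := Finset.univ) fun i => x' i = 0
    rw [Finset.card_univ, Fintype.card_fin] at h
    unfold suppCard at hcon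
    simp only [ne_eq] at hcon
    omega
  obtain ⟨g⟩ : Nonempty (Fin m ↪ {i // i ∈ Finset.univ.filter fun i => x' i = 0}) :=
    Function.Embedding.nonempty_of_card_le (by rwa [Fintype.card_fin, Fintype.card_coe])
  have hgz (k : Fin m) : x' (g k) = 0 := (Finset.mem_filter.mp (g k).2).2
  have hr : (fun i => mulVec' A x' i - y i) = 0 := by
    refine Matrix.eq_zero_of_vecMul_eq_zero
      (hA (fun k => (g k : Fin N)) (Subtype.val_injective.comp g.injective)) ?_
    funext k
    have h := hstat (g k)
    rw [hgz k] at h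
    simpa [Matrix.vecMul, dotProduct] using h
  have hx (j : Fin N) : x' j = 0 := by
    by_contra hj
    have h := hstat j
    have hri (i : Fin m) : mulVec' A x' i - y i = 0 := congrFun hr i
    simp only [hri, zero_mul, Finset.sum_const_zero, zero_add] at h
    have hpow : 0 < |x' j| ^ (p - 2) := Real.rpow_pos_of_pos (abs_pos.mpr hj) _
    have hp0 : 0 < p := by linarith
    exact mul_ne_zero hlam.ne' (mul_ne_zero (mul_pos hp0 hpow).ne' hj) h
  apply hy
  funext i
  simpa [mulVec', hx] using congrFun hr i
end

section
/- Let p > 1, N ≥ m, r > 0, λ₁ > 0, and λ₂ ≥ 0. Suppose A ∈ ℝ^{m×N} is such that every m×m submatrix of A is invertible, and y ∈ ℝ^m is nonzero. Then every nonzero optimal solution x* of the generalized elastic net problem min (1/2)‖Ax − y‖₂² + λ₁‖x‖_p^r + λ₂‖x‖₂² satisfies |supp(x*)| ≥ N − m + 1. -/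
/-!
The penalty `‖x‖_p ^ r` is differentiable at every nonzero point because `p > 1`, so a nonzero
optimal solution `x` is a critical point of the objective. With the residual `w = Ax - y` this
reads, for some constant `c > 0` and every direction `v`,
`⟨w, Av⟩ + c ∑ |x_j| ^ (p - 2) x_j v_j + 2 λ₂ ∑ x_j v_j = 0` (`exists_stationarity`).
For `v = e_j` with `x_j = 0` this says that `w` is orthogonal to the `j`-th column of `A`.
If at least `m` coordinates of `x` vanish, then `w` is orthogonal to the columns of an invertible
`m × m` submatrix, so `w = 0`; taking `v = x` then makes a sum of nonnegative terms, one of them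
positive, equal to zero.
-/

open scoped BigOperators

lemma norm2_sq {m : ℕ} (v : Fin m → ℝ) : norm2 v ^ 2 = ∑ i, v i ^ 2 :=
  Real.sq_sqrt (Finset.sum_nonneg fun i _ => sq_nonneg (v i))

lemma sum_abs_rpow_pos {N : ℕ} (p : ℝ) {x : Fin N → ℝ} (hx : x ≠ 0) :
    0 < ∑ i, |x i| ^ p := by
  obtain ⟨j, hj⟩ := Function.ne_iff.mp hx
  exact Finset.sum_pos' (fun i _ => by positivity)
    ⟨j, Finset.mem_univ j, Real.rpow_pos_of_pos (abs_pos.mpr hj) p⟩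

/-- The directional derivative of `‖·‖_p ^ r` at a nonzero point; the positive constant `c` equals
`r ‖x‖_p ^ (r - p)`, but only its sign matters. -/
lemma exists_hasDerivAt_pnorm_rpow {N : ℕ} {p r : ℝ} (hp : 1 < p) (hr : 0 < r)
    {x : Fin N → ℝ} (hx : x ≠ 0) :
    ∃ c : ℝ, 0 < c ∧ ∀ v : Fin N → ℝ,
      HasDerivAt (fun t : ℝ => pnorm p (x + t • v) ^ r)
        (c * ∑ j, |x j| ^ (p - 2) * x j * v j) 0 := by
  have hS := sum_abs_rpow_pos p hx
  set S := ∑ i, |x i| ^ p with hSdef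
  have hp0 : 0 < p := by linarith
  refine ⟨p * (1 / p) * S ^ (1 / p - 1) * r * (S ^ (1 / p)) ^ (r - 1), by positivity,
    fun v => ?_⟩
  have hcoord : ∀ j, HasDerivAt (fun t : ℝ => |x j + t * v j| ^ p)
      (p * |x j| ^ (p - 2) * x j * v j) 0 := by
    intro j
    have hlin : HasDerivAt (fun t : ℝ => x j + t * v j) (v j) 0 := by
      simpa using ((hasDerivAt_id (0 : ℝ)).mul_const (v j)).const_add (x j)
    have habs : HasDerivAt (fun s : ℝ => |s| ^ p) (p * |x j| ^ (p - 2) * x j)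
        (x j + 0 * v j) := by
      simpa using hasDerivAt_abs_rpow (x j) hp
    exact habs.comp 0 hlin
  have hsum : HasDerivAt (fun t : ℝ => ∑ j, |x j + t * v j| ^ p)
      (∑ j, p * |x j| ^ (p - 2) * x j * v j) 0 :=
    HasDerivAt.fun_sum fun j _ => hcoord j
  have h0 : ∑ j, |x j + 0 * v j| ^ p = S := by simp [hSdef]
  have h1 := hsum.rpow_const (p := 1 / p) (Or.inl (by rw [h0]; exact hS.ne'))
  have h2 := h1.rpow_const (p := r)
    (Or.inl (by rw [h0]; exact (Real.rpow_pos_of_pos hS _).ne'))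
  have hpull : ∑ j, p * |x j| ^ (p - 2) * x j * v j
      = p * ∑ j, |x j| ^ (p - 2) * x j * v j := by
    rw [Finset.mul_sum]
    exact Finset.sum_congr rfl fun j _ => by ring
  rw [h0, hpull] at h2
  refine h2.congr_deriv ?_
  ring

lemma hasDerivAt_sum_sq_line {n : ℕ} (a b : Fin n → ℝ) :
    HasDerivAt (fun t : ℝ => ∑ i, (a i + t * b i) ^ 2) (2 * ∑ i, a i * b i) 0 := by
  rw [Finset.mul_sum]
  refine HasDerivAt.fun_sum fun i _ => ?_
  have hlin : HasDerivAt (fun t : ℝ => a i + t * b i) (b i) 0 := by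
    simpa using ((hasDerivAt_id (0 : ℝ)).mul_const (b i)).const_add (a i)
  refine (hlin.fun_pow 2).congr_deriv ?_
  norm_num
  ring

/-- The first-order optimality condition, tested against an arbitrary direction `v`. -/
lemma exists_stationarity {m N : ℕ} {p r l1 l2 : ℝ} (hp : 1 < p) (hr : 0 < r) (hl1 : 0 < l1)
    (A : Fin m → Fin N → ℝ) (y : Fin m → ℝ) {x : Fin N → ℝ} (hx : x ≠ 0)
    (hopt : ∀ z,
      (1 / 2) * norm2 (mulVec' A x - y) ^ 2 + l1 * pnorm p x ^ r + l2 * ∑ i, x i ^ 2 ≤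
        (1 / 2) * norm2 (mulVec' A z - y) ^ 2 + l1 * pnorm p z ^ r + l2 * ∑ i, z i ^ 2) :
    ∃ c : ℝ, 0 < c ∧ ∀ v : Fin N → ℝ,
      ∑ i, (mulVec' A x - y) i * mulVec' A v i + c * ∑ j, |x j| ^ (p - 2) * x j * v j
        + 2 * l2 * ∑ j, x j * v j = 0 := by
  obtain ⟨c, hc, hderiv⟩ := exists_hasDerivAt_pnorm_rpow hp hr hx
  refine ⟨l1 * c, by positivity, fun v => ?_⟩
  have hres : ∀ t : ℝ, norm2 (mulVec' A (x + t • v) - y) ^ 2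
      = ∑ i, ((mulVec' A x - y) i + t * mulVec' A v i) ^ 2 := by
    intro t
    rw [norm2_sq]
    refine Finset.sum_congr rfl fun i _ => ?_
    have : mulVec' A (x + t • v) i = mulVec' A x i + t * mulVec' A v i := by
      simp only [mulVec', Pi.add_apply, Pi.smul_apply, smul_eq_mul, mul_add,
        Finset.sum_add_distrib, Finset.mul_sum]
      congr 1
      exact Finset.sum_congr rfl fun j _ => by ring
    simp only [Pi.sub_apply, this]
    ring
  have h := (((hasDerivAt_sum_sq_line (mulVec' A x - y) (mulVec' A v)).const_mul (1 / 2)).add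
    ((hderiv v).const_mul l1)).add ((hasDerivAt_sum_sq_line x v).const_mul l2)
  have hmin : IsLocalMin
      (((fun t : ℝ => 1 / 2 * ∑ i, ((mulVec' A x - y) i + t * mulVec' A v i) ^ 2)
        + fun t : ℝ => l1 * pnorm p (x + t • v) ^ r)
        + fun t : ℝ => l2 * ∑ j, (x j + t * v j) ^ 2) 0 := by
    refine Filter.Eventually.of_forall fun t => ?_
    have := hopt (x + t • v)
    rw [hres t] at this
    simpa [norm2_sq] using this
  have h0 := hmin.hasDerivAt_eq_zero h
  linarith

/-- Sparsity lower bound for the generalized elastic net with `p > 1`: if every `m×m`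
submatrix of `A` is invertible and `y ≠ 0`, then every nonzero optimal solution of
`min (1/2)‖Ax − y‖₂² + λ₁‖x‖_p^r + λ₂‖x‖₂²` has at least `N - m + 1` nonzero entries. -/
theorem sparsity_lower_bound_EN {m N : ℕ} (hmN : m ≤ N) (p : ℝ) (hp : 1 < p)
    (r l1 l2 : ℝ) (hr : 0 < r) (hl1 : 0 < l1) (hl2 : 0 ≤ l2)
    (A : Fin m → Fin N → ℝ)
    (hA : ∀ g : Fin m → Fin N, Function.Injective g →
      (Matrix.of fun i k => A i (g k)).det ≠ 0)
    (y : Fin m → ℝ) (hy : y ≠ 0)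
    (x' : Fin N → ℝ) (hx'ne : x' ≠ 0)
    (hopt : ∀ x,
      (1 / 2) * norm2 (mulVec' A x' - y) ^ 2 + l1 * pnorm p x' ^ r + l2 * ∑ i, x' i ^ 2 ≤
        (1 / 2) * norm2 (mulVec' A x - y) ^ 2 + l1 * pnorm p x ^ r + l2 * ∑ i, x i ^ 2) :
    N - m + 1 ≤ suppCard x' := by
  obtain ⟨c, hc, hstat⟩ := exists_stationarity hp hr hl1 A y hx'ne hopt
  by_contra hlt
  have hcard : m ≤ (Finset.univ.filter fun i => x' i = 0).card := by
    have := Finset.card_filter_add_card_filter_not (s := (Finset.univ : Finset (Fin N)))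
      (fun i => x' i = 0)
    simp only [Finset.card_univ, Fintype.card_fin] at this
    simp only [suppCard, ne_eq] at hlt
    omega
  obtain ⟨Z, hZ, hZcard⟩ := Finset.exists_subset_card_eq hcard
  let g : Fin m → Fin N := Z.orderEmbOfFin hZcard
  have hg : Function.Injective g := (Z.orderEmbOfFin hZcard).injective
  have hgzero : ∀ k, x' (g k) = 0 := fun k =>
    (Finset.mem_filter.mp (hZ (Z.orderEmbOfFin_mem hZcard k))).2
  have hw : mulVec' A x' - y = 0 := by
    refine Matrix.eq_zero_of_vecMul_eq_zero (hA g hg) ?_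
    ext k
    -- At a zero coordinate the penalty terms vanish: `|x_j| ^ (p - 2) * x_j = 0` even if `p < 2`.
    have hk := hstat (Pi.single (g k) 1)
    simpa [Matrix.vecMul, dotProduct, mulVec', Pi.single_apply, hgzero k] using hk
  have hx := hstat x'
  obtain ⟨j, hj⟩ := Function.ne_iff.mp hx'ne
  have hpos : 0 < ∑ j, |x' j| ^ (p - 2) * x' j * x' j := by
    refine Finset.sum_pos' (fun i _ => ?_) ⟨j, Finset.mem_univ j, ?_⟩
    · rw [mul_assoc]
      exact mul_nonneg (by positivity) (mul_self_nonneg _)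
    · rw [mul_assoc]
      exact mul_pos (Real.rpow_pos_of_pos (abs_pos.mpr hj) _) (mul_self_pos.mpr hj)
  have hnonneg : 0 ≤ ∑ j, x' j * x' j := Finset.sum_nonneg fun i _ => mul_self_nonneg _
  rw [hw] at hx
  simp only [Pi.zero_apply, zero_mul, Finset.sum_const_zero, zero_add] at hx
  have h1 := mul_pos hc hpos
  have h2 := mul_nonneg hl2 hnonneg
  linarith
end

section
/- Let p > 1. Suppose A ∈ ℝ^{m×N} has full row rank, y ∈ ℝ^m, and 0 < η < min{‖x‖_p : Ax = y}. Then the problem min ‖Ax − y‖₂ subject to ‖x‖_p ≤ η attains a unique optimal solution x*, this solution satisfies ‖x*‖_p = η, and there exists a unique Lagrange multiplier μ > 0 such that Aᵀ(Ax* − y) + μ∇f(x*) = 0, where f(x) := ‖x‖_p^p and (∇f(x))_i = p·sgn(x_i)·|x_i|^{p−1}. -/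
/-!
All norms are replaced by power sums: `‖x‖_p ≤ η` becomes `∑ |x i| ^ p ≤ η ^ p`
and the objective becomes `∑ (A x - y)_j ^ 2`; call a minimiser of this problem optimal.

An optimal point exists by compactness of the `p`-ball (`exists_isOpt`). Write `g = Aᵀ(A x - y)`.
The objective is quadratic along lines with derivative `2 ⟨g, d⟩` in direction `d`, so
`⟨g, d⟩ ≥ 0` for every direction `d` in which an optimal `x` can be moved inside the ball
(`IsOpt.dot_nonneg`). If `x` were interior, all directions would be allowed, forcing `g = 0` and,
by surjectivity of `A`, `A x = y`, which is excluded; hence optimal points lie on the sphere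
(`IsOpt.powSum_eq`). Since the power sum is strictly convex, the midpoint of two distinct optimal
points would be an optimal interior point, so the optimum is unique.

For the multiplier, let `n = ∇f(x)`. Every `d` with `⟨n, d⟩ < 0` is an allowed direction, so
`⟨n, d⟩ < 0` implies `⟨g, d⟩ ≥ 0`. Letting `d` approach the boundary of this half-space shows that
`g` is a nonpositive multiple of `n` (`exists_multiplier_of_halfspace`), nonzero because `g ≠ 0`.
Uniqueness of the multiplier follows from `n ≠ 0`.
-/

open scoped BigOperators

open Filter Topology

/-- The function `f(x) = ‖x‖_p^p = ∑ |x i| ^ p`. -/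
noncomputable def powSum {N : ℕ} (p : ℝ) (x : Fin N → ℝ) : ℝ := ∑ i, |x i| ^ p

/-- The squared residual `‖A x - y‖₂²`. -/
noncomputable def sqRes {m N : ℕ} (A : Fin m → Fin N → ℝ) (y : Fin m → ℝ) (x : Fin N → ℝ) : ℝ :=
  ∑ j, (mulVec' A x - y) j ^ 2

/-- The vector `Aᵀ(A x - y)`, half the gradient of `sqRes A y` at `x`. -/
noncomputable def resGrad {m N : ℕ} (A : Fin m → Fin N → ℝ) (y : Fin m → ℝ) (x : Fin N → ℝ) :
    Fin N → ℝ :=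
  fun i => ∑ j, A j i * (mulVec' A x j - y j)

/-- `x` minimises the squared residual over the ball `{z | ∑ |z i| ^ p ≤ c}`. -/
def IsOpt {m N : ℕ} (p : ℝ) (A : Fin m → Fin N → ℝ) (y : Fin m → ℝ) (c : ℝ)
    (x : Fin N → ℝ) : Prop :=
  powSum p x ≤ c ∧ ∀ z, powSum p z ≤ c → sqRes A y x ≤ sqRes A y z

lemma powSum_nonneg {N : ℕ} (p : ℝ) (x : Fin N → ℝ) : 0 ≤ powSum p x :=
  Finset.sum_nonneg fun _ _ => Real.rpow_nonneg (abs_nonneg _) _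

lemma sqRes_nonneg {m N : ℕ} (A : Fin m → Fin N → ℝ) (y : Fin m → ℝ) (x : Fin N → ℝ) :
    0 ≤ sqRes A y x :=
  Finset.sum_nonneg fun _ _ => sq_nonneg _

lemma pnorm_rpow {N : ℕ} {p : ℝ} (hp : 1 < p) (x : Fin N → ℝ) :
    pnorm p x ^ p = powSum p x := by
  have hp0 : p ≠ 0 := by positivity
  change (powSum p x ^ (1 / p)) ^ p = powSum p x
  rw [← Real.rpow_mul (powSum_nonneg p x), one_div_mul_cancel hp0, Real.rpow_one]

lemma pnorm_nonneg {N : ℕ} (p : ℝ) (x : Fin N → ℝ) : 0 ≤ pnorm p x :=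
  Real.rpow_nonneg (powSum_nonneg p x) _

lemma pnorm_le_iff {N : ℕ} {p η : ℝ} (hp : 1 < p) (hη : 0 < η) (x : Fin N → ℝ) :
    pnorm p x ≤ η ↔ powSum p x ≤ η ^ p := by
  rw [← pnorm_rpow hp, Real.rpow_le_rpow_iff (pnorm_nonneg p x) hη.le (by linarith)]

lemma norm2_le_iff {m N : ℕ} (A : Fin m → Fin N → ℝ) (y : Fin m → ℝ) (x z : Fin N → ℝ) :
    norm2 (mulVec' A x - y) ≤ norm2 (mulVec' A z - y) ↔ sqRes A y x ≤ sqRes A y z :=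
  Real.sqrt_le_sqrt_iff (sqRes_nonneg A y z)

lemma continuous_powSum {N : ℕ} {p : ℝ} (hp : 1 < p) :
    Continuous (powSum p : (Fin N → ℝ) → ℝ) := by
  unfold powSum
  exact continuous_finsetSum _ fun i _ =>
    (continuous_apply i).abs.rpow_const fun _ => Or.inr (by linarith)

lemma continuous_sqRes {m N : ℕ} (A : Fin m → Fin N → ℝ) (y : Fin m → ℝ) :
    Continuous (sqRes A y) := by
  unfold sqRes mulVec'
  simp only [Pi.sub_apply]
  fun_prop

lemma exists_isOpt {m N : ℕ} {p : ℝ} (hp : 1 < p) (A : Fin m → Fin N → ℝ) (y : Fin m → ℝ)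
    {η : ℝ} (hη : 0 < η) : ∃ x, IsOpt p A y (η ^ p) x := by
  have hclosed : IsClosed {x : Fin N → ℝ | powSum p x ≤ η ^ p} :=
    isClosed_le (continuous_powSum hp) continuous_const
  have hsub : {x : Fin N → ℝ | powSum p x ≤ η ^ p} ⊆ Metric.closedBall 0 η := by
    intro x hx
    rw [mem_closedBall_zero_iff, pi_norm_le_iff_of_nonneg hη.le]
    intro i
    have h1 : |x i| ^ p ≤ powSum p x :=
      Finset.single_le_sum (f := fun i => |x i| ^ p)
        (fun _ _ => Real.rpow_nonneg (abs_nonneg _) _) (Finset.mem_univ i)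
    exact (Real.rpow_le_rpow_iff (abs_nonneg _) hη.le (by linarith)).1 (h1.trans hx)
  have hcomp := (isCompact_closedBall (0 : Fin N → ℝ) η).of_isClosed_subset hclosed hsub
  have hne : {x : Fin N → ℝ | powSum p x ≤ η ^ p}.Nonempty := by
    refine ⟨0, ?_⟩
    have hp0 : p ≠ 0 := by positivity
    simp only [Set.mem_ofPred_eq, powSum, Pi.zero_apply, abs_zero, Real.zero_rpow hp0,
      Finset.sum_const_zero]
    positivity
  obtain ⟨x, hx, hmin⟩ := hcomp.exists_isMinOn hne (continuous_sqRes A y).continuousOn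
  exact ⟨x, hx, fun z hz => hmin hz⟩

lemma mulVec'_line {m N : ℕ} (A : Fin m → Fin N → ℝ) (x d : Fin N → ℝ) (t : ℝ) (j : Fin m) :
    mulVec' A (fun i => x i + t * d i) j = mulVec' A x j + t * mulVec' A d j := by
  simp only [mulVec', Finset.mul_sum, ← Finset.sum_add_distrib]
  exact Finset.sum_congr rfl fun _ _ => by ring

lemma resGrad_dot {m N : ℕ} (A : Fin m → Fin N → ℝ) (y : Fin m → ℝ) (x d : Fin N → ℝ) :
    ∑ i, resGrad A y x i * d i = ∑ j, (mulVec' A x j - y j) * mulVec' A d j := by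
  unfold resGrad
  simp only [Finset.sum_mul]
  rw [Finset.sum_comm]
  refine Finset.sum_congr rfl fun j _ => ?_
  change _ = (mulVec' A x j - y j) * ∑ i, A j i * d i
  rw [Finset.mul_sum]
  exact Finset.sum_congr rfl fun _ _ => by ring

lemma sqRes_line {m N : ℕ} (A : Fin m → Fin N → ℝ) (y : Fin m → ℝ) (x d : Fin N → ℝ) (t : ℝ) :
    sqRes A y (fun i => x i + t * d i) =
      sqRes A y x + t * (2 * ∑ i, resGrad A y x i * d i + t * ∑ j, mulVec' A d j ^ 2) := by
  rw [resGrad_dot]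
  simp only [sqRes, Pi.sub_apply, mulVec'_line, Finset.mul_sum, ← Finset.sum_add_distrib]
  exact Finset.sum_congr rfl fun _ _ => by ring

/-- First-order optimality condition in a feasible direction. -/
lemma IsOpt.dot_nonneg {m N : ℕ} {p : ℝ} {A : Fin m → Fin N → ℝ} {y : Fin m → ℝ} {c : ℝ}
    {x : Fin N → ℝ} (hx : IsOpt p A y c x) (d : Fin N → ℝ)
    (hd : ∀ᶠ t in 𝓝[>] (0 : ℝ), powSum p (fun i => x i + t * d i) ≤ c) :
    0 ≤ ∑ i, resGrad A y x i * d i := by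
  set a := ∑ i, resGrad A y x i * d i with ha
  set q := ∑ j, mulVec' A d j ^ 2 with hq
  have hlim : Tendsto (fun t : ℝ => 2 * a + t * q) (𝓝[>] 0) (𝓝 (2 * a + 0 * q)) :=
    (Continuous.tendsto (by fun_prop) 0).mono_left nhdsWithin_le_nhds
  have hev : ∀ᶠ t in 𝓝[>] (0 : ℝ), 0 ≤ 2 * a + t * q := by
    filter_upwards [hd, self_mem_nhdsWithin] with t ht ht0
    have h := hx.2 _ ht
    rw [sqRes_line, ← ha, ← hq] at h
    exact nonneg_of_mul_nonneg_right (by linarith) (Set.mem_Ioi.1 ht0)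
  have := ge_of_tendsto hlim hev
  linarith

lemma exists_mulVec'_eq {m N : ℕ} (A : Fin m → Fin N → ℝ) (hA : (Matrix.of A).rank = m)
    (y : Fin m → ℝ) : ∃ x, mulVec' A x = y := by
  have htop : LinearMap.range (Matrix.of A).mulVecLin = ⊤ :=
    Submodule.eq_top_of_finrank_eq (by
      rw [Module.finrank_fin_fun]
      exact hA)
  obtain ⟨x, hx⟩ := LinearMap.range_eq_top.1 htop y
  exact ⟨x, hx⟩

/-- A stationary point of the residual solves `A x = y`, because `A` is surjective. -/
lemma mulVec'_eq_of_resGrad_eq_zero {m N : ℕ} {A : Fin m → Fin N → ℝ}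
    (hA : (Matrix.of A).rank = m) {y : Fin m → ℝ} {x : Fin N → ℝ}
    (h : ∀ i, resGrad A y x i = 0) : mulVec' A x = y := by
  obtain ⟨d, hd⟩ := exists_mulVec'_eq A hA (mulVec' A x - y)
  have h1 := resGrad_dot A y x d
  simp only [h, zero_mul, Finset.sum_const_zero, hd, Pi.sub_apply] at h1
  have h2 := (Finset.sum_eq_zero_iff_of_nonneg fun j _ => mul_self_nonneg _).1 h1.symm
  funext j
  have := mul_self_eq_zero.1 (h2 j (Finset.mem_univ j))
  linarith

/-- If `A x = y` has no solution in the ball, every optimal point lies on the sphere. -/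
lemma IsOpt.powSum_eq {m N : ℕ} {p : ℝ} (hp : 1 < p) {A : Fin m → Fin N → ℝ}
    (hA : (Matrix.of A).rank = m) {y : Fin m → ℝ} {c : ℝ} {x : Fin N → ℝ}
    (hc : ∀ z, mulVec' A z = y → c < powSum p z) (hx : IsOpt p A y c x) :
    powSum p x = c := by
  by_contra hne
  have hlt : powSum p x < c := lt_of_le_of_ne hx.1 hne
  have key := hx.dot_nonneg (fun i => -resGrad A y x i) (by
    have hcont : Continuous fun t : ℝ => powSum p (fun i => x i + t * -resGrad A y x i) :=
      (continuous_powSum hp).comp (by fun_prop)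
    have h0 : powSum p (fun i => x i + (0 : ℝ) * -resGrad A y x i) < c := by simpa using hlt
    exact ((hcont.tendsto 0).eventually_le_const h0).filter_mono nhdsWithin_le_nhds)
  have hsum : ∑ i, resGrad A y x i * resGrad A y x i = 0 := by
    refine le_antisymm ?_ (Finset.sum_nonneg fun i _ => mul_self_nonneg _)
    simpa using key
  have hz := (Finset.sum_eq_zero_iff_of_nonneg fun i _ => mul_self_nonneg _).1 hsum
  have hxy := mulVec'_eq_of_resGrad_eq_zero hA
    fun i => mul_self_eq_zero.1 (hz i (Finset.mem_univ i))
  exact absurd (hc x hxy) (not_lt.2 hlt.le)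

lemma abs_midpoint_rpow_lt {p : ℝ} (hp : 1 < p) {a b : ℝ} (hab : a ≠ b) :
    |(a + b) / 2| ^ p < (|a| ^ p + |b| ^ p) / 2 := by
  have hp0 : p ≠ 0 := by positivity
  by_cases h : |a| = |b|
  -- here `b = -a ≠ 0`, so the midpoint is `0`
  · have hba : b = -a := by
      rcases abs_eq_abs.1 h with h | h
      · exact absurd h hab
      · linarith
    have ha : a ≠ 0 := by
      rintro rfl
      exact hab (by simp [hba])
    have : 0 < |a| ^ p := Real.rpow_pos_of_pos (abs_pos.2 ha) p
    rw [hba, add_neg_cancel, zero_div, abs_zero, Real.zero_rpow hp0, abs_neg]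
    linarith
  · have h1 := (strictConvexOn_rpow hp).2 (Set.mem_Ici.2 (abs_nonneg a))
      (Set.mem_Ici.2 (abs_nonneg b)) h (by norm_num : (0 : ℝ) < 1 / 2)
      (by norm_num : (0 : ℝ) < 1 / 2) (by norm_num)
    simp only [smul_eq_mul] at h1
    have h2 : |(a + b) / 2| ≤ 1 / 2 * |a| + 1 / 2 * |b| := by
      rw [abs_div, abs_two]
      linarith [abs_add_le a b]
    have h3 := Real.rpow_le_rpow (abs_nonneg _) h2 (by linarith : 0 ≤ p)
    linarith

lemma powSum_midpoint_lt {N : ℕ} {p : ℝ} (hp : 1 < p) {x z : Fin N → ℝ} (h : x ≠ z) :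
    powSum p (fun i => (x i + z i) / 2) < (powSum p x + powSum p z) / 2 := by
  obtain ⟨k, hk⟩ := Function.ne_iff.1 h
  unfold powSum
  rw [← Finset.sum_add_distrib, Finset.sum_div]
  refine Finset.sum_lt_sum (fun i _ => ?_) ⟨k, Finset.mem_univ k, abs_midpoint_rpow_lt hp hk⟩
  by_cases hi : x i = z i
  · simp only [hi, add_self_div_two, le_refl]
  · exact (abs_midpoint_rpow_lt hp hi).le

lemma sqRes_midpoint_le {m N : ℕ} (A : Fin m → Fin N → ℝ) (y : Fin m → ℝ) (x z : Fin N → ℝ) :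
    sqRes A y (fun i => (x i + z i) / 2) ≤ (sqRes A y x + sqRes A y z) / 2 := by
  unfold sqRes
  rw [← Finset.sum_add_distrib, Finset.sum_div]
  refine Finset.sum_le_sum fun j _ => ?_
  have hmid : mulVec' A (fun i => (x i + z i) / 2) j = (mulVec' A x j + mulVec' A z j) / 2 := by
    simp only [mulVec', ← Finset.sum_add_distrib, Finset.sum_div]
    exact Finset.sum_congr rfl fun _ _ => by ring
  simp only [Pi.sub_apply, hmid]
  nlinarith [sq_nonneg (mulVec' A x j - mulVec' A z j)]

/-- Two distinct optimal points would have an optimal midpoint in the interior of the ball. -/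
lemma IsOpt.unique {m N : ℕ} {p : ℝ} (hp : 1 < p) {A : Fin m → Fin N → ℝ}
    (hA : (Matrix.of A).rank = m) {y : Fin m → ℝ} {c : ℝ} {x z : Fin N → ℝ}
    (hc : ∀ z, mulVec' A z = y → c < powSum p z) (hx : IsOpt p A y c x)
    (hz : IsOpt p A y c z) : z = x := by
  by_contra hne
  have h1 := powSum_midpoint_lt hp (Ne.symm hne)
  have hlt : powSum p (fun i => (x i + z i) / 2) < c := by linarith [hx.1, hz.1]
  have hopt : IsOpt p A y c (fun i => (x i + z i) / 2) :=
    ⟨hlt.le, fun w hw => by linarith [sqRes_midpoint_le A y x z, hx.2 w hw, hz.2 w hw]⟩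
  exact hlt.ne (hopt.powSum_eq hp hA hc)

/-- The `i`-th coordinate of `∇f`, in the form `p · sgn(a) · |a|^{p-1}`; at `a = 0` the derivative
is `0` because `p > 1`. -/
lemma hasDerivAt_abs_rpow_sign {p : ℝ} (hp : 1 < p) (a : ℝ) :
    HasDerivAt (fun s : ℝ => |s| ^ p) (p * Real.sign a * |a| ^ (p - 1)) a := by
  convert hasDerivAt_abs_rpow a hp using 1
  rcases eq_or_ne a 0 with rfl | ha
  · simp
  · have h1 : |a| ^ (p - 1) = |a| ^ (p - 2) * |a| := by
      rw [← Real.rpow_add_one (abs_pos.2 ha).ne']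
      ring_nf
    have h2 : Real.sign a * |a| = a := by
      rcases lt_or_gt_of_ne ha with h | h
      · rw [Real.sign_of_neg h, abs_of_neg h]; ring
      · rw [Real.sign_of_pos h, abs_of_pos h]; ring
    calc p * Real.sign a * |a| ^ (p - 1) = p * |a| ^ (p - 2) * (Real.sign a * |a|) := by
          rw [h1]; ring
      _ = p * |a| ^ (p - 2) * a := by rw [h2]

/-- Directions of negative derivative of `f` are descent directions. -/
lemma eventually_powSum_le {N : ℕ} {p : ℝ} (hp : 1 < p) (x d : Fin N → ℝ)
    (hd : ∑ i, (p * Real.sign (x i) * |x i| ^ (p - 1)) * d i < 0) :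
    ∀ᶠ t in 𝓝[>] (0 : ℝ), powSum p (fun i => x i + t * d i) ≤ powSum p x := by
  have hder : HasDerivAt (fun t : ℝ => powSum p (fun i => x i + t * d i))
      (∑ i, (p * Real.sign (x i) * |x i| ^ (p - 1)) * d i) 0 := by
    unfold powSum
    refine HasDerivAt.fun_sum fun i _ => ?_
    have hline : HasDerivAt (fun t : ℝ => x i + t * d i) (d i) 0 := by
      simpa using ((hasDerivAt_id (0 : ℝ)).mul_const (d i)).const_add (x i)
    have hout : HasDerivAt (fun s : ℝ => |s| ^ p) (p * Real.sign (x i) * |x i| ^ (p - 1))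
        (x i + 0 * d i) := by
      simpa using hasDerivAt_abs_rpow_sign hp (x i)
    exact hout.comp 0 hline
  have hslope := (hasDerivAt_iff_tendsto_slope_zero.1 hder).eventually_lt_const hd
  have hsub : 𝓝[>] (0 : ℝ) ≤ 𝓝[≠] 0 := nhdsWithin_mono _ fun t ht => ne_of_gt ht
  filter_upwards [hslope.filter_mono hsub, self_mem_nhdsWithin] with t ht ht0
  simp only [zero_add, smul_eq_mul, zero_mul, add_zero] at ht
  have ht0' : 0 < t⁻¹ := inv_pos.2 ht0
  by_contra hcon
  exact absurd ht (not_lt.2 (mul_nonneg ht0'.le (by linarith)))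

/-- The Farkas lemma for a single open half-space: if `⟨g, d⟩ ≥ 0` whenever `⟨n, d⟩ < 0`, then `g` is
a nonpositive multiple of `n`. -/
lemma exists_multiplier_of_halfspace {N : ℕ} (g n : Fin N → ℝ) (hn : n ≠ 0)
    (h : ∀ d : Fin N → ℝ, ∑ i, n i * d i < 0 → 0 ≤ ∑ i, g i * d i) :
    ∃ μ : ℝ, 0 ≤ μ ∧ ∀ i, g i + μ * n i = 0 := by
  have hnn : 0 < ∑ i, n i * n i := by
    obtain ⟨k, hk⟩ := Function.ne_iff.1 hn
    exact Finset.sum_pos' (fun i _ => mul_self_nonneg _)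
      ⟨k, Finset.mem_univ k, mul_self_pos.2 hk⟩
  have hclosed : ∀ d : Fin N → ℝ, ∑ i, n i * d i ≤ 0 → 0 ≤ ∑ i, g i * d i := by
    intro d hd
    have hlim : Tendsto (fun t : ℝ => ∑ i, g i * (d i - t * n i)) (𝓝[>] 0)
        (𝓝 (∑ i, g i * (d i - 0 * n i))) :=
      (Continuous.tendsto (by fun_prop) (0 : ℝ)).mono_left nhdsWithin_le_nhds
    have hev : ∀ᶠ t in 𝓝[>] (0 : ℝ), 0 ≤ ∑ i, g i * (d i - t * n i) := by
      filter_upwards [self_mem_nhdsWithin] with t ht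
      apply h
      have : ∑ i, n i * (d i - t * n i) = ∑ i, n i * d i - t * ∑ i, n i * n i := by
        rw [Finset.mul_sum, ← Finset.sum_sub_distrib]
        exact Finset.sum_congr rfl fun _ _ => by ring
      rw [this]
      linarith [mul_pos (Set.mem_Ioi.1 ht) hnn]
    simpa using ge_of_tendsto hlim hev
  have hgn : ∑ i, g i * n i ≤ 0 := by
    have := hclosed (fun i => -n i) (by simpa using hnn.le)
    simpa using this
  set G := ∑ i, g i * n i with hG
  set Q := ∑ i, n i * n i with hQ
  set μ := -G / Q with hμ
  have hμQ : μ * Q = -G := div_mul_cancel₀ _ hnn.ne'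
  refine ⟨μ, div_nonneg (by linarith) hnn.le, ?_⟩
  -- `g + μ n` is the component of `g` orthogonal to `n`; test with its negative
  have hort : ∑ i, n i * (g i + μ * n i) = 0 := by
    have : ∑ i, n i * (g i + μ * n i) = G + μ * Q := by
      rw [hG, hQ, Finset.mul_sum, ← Finset.sum_add_distrib]
      exact Finset.sum_congr rfl fun _ _ => by ring
    linarith
  have htest := hclosed (fun i => -(g i + μ * n i)) (by
    simp only [mul_neg, Finset.sum_neg_distrib, hort, neg_zero, le_refl])
  simp only [mul_neg, Finset.sum_neg_distrib] at htest
  have hsq : ∑ i, (g i + μ * n i) * (g i + μ * n i) = 0 := by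
    have : ∑ i, (g i + μ * n i) * (g i + μ * n i) =
        ∑ i, g i * (g i + μ * n i) + μ * ∑ i, n i * (g i + μ * n i) := by
      rw [Finset.mul_sum, ← Finset.sum_add_distrib]
      exact Finset.sum_congr rfl fun _ _ => by ring
    rw [hort] at this
    exact le_antisymm (by linarith) (Finset.sum_nonneg fun i _ => mul_self_nonneg _)
  have hz := (Finset.sum_eq_zero_iff_of_nonneg fun i _ => mul_self_nonneg _).1 hsq
  exact fun i => mul_self_eq_zero.1 (hz i (Finset.mem_univ i))

/-- For `p > 1`, if `A` has full row rank and `0 < η < min{‖x‖_p : Ax = y}`, then the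
problem `min ‖Ax − y‖₂  s.t.  ‖x‖_p ≤ η` attains a unique optimal solution `x*`, which
satisfies `‖x*‖_p = η`, and there is a unique Lagrange multiplier `μ > 0` with
`Aᵀ(Ax* − y) + μ ∇f(x*) = 0`, where `(∇f(x))_i = p · sgn(x_i) · |x_i|^{p−1}`. -/
theorem BPDN2_unique_solution_and_multiplier {m N : ℕ} (p : ℝ) (hp : 1 < p)
    (A : Fin m → Fin N → ℝ)
    (hA : (Matrix.of A).rank = m)
    (y : Fin m → ℝ) (η : ℝ) (hη : 0 < η)
    (hηmin : ∀ x, mulVec' A x = y → η < pnorm p x) :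
    ∃ xs : Fin N → ℝ,
      -- xs is an optimal solution
      (pnorm p xs ≤ η ∧
        ∀ x, pnorm p x ≤ η → norm2 (mulVec' A xs - y) ≤ norm2 (mulVec' A x - y)) ∧
      -- xs is the unique optimal solution
      (∀ x', (pnorm p x' ≤ η ∧
          ∀ x, pnorm p x ≤ η → norm2 (mulVec' A x' - y) ≤ norm2 (mulVec' A x - y)) →
        x' = xs) ∧
      -- it lies on the boundary of the constraint set
      pnorm p xs = η ∧
      -- unique positive Lagrange multiplier
      (∃! μ : ℝ, 0 < μ ∧ ∀ i,
        (∑ j, A j i * (mulVec' A xs j - y j)) +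
          μ * (p * Real.sign (xs i) * |xs i| ^ (p - 1)) = 0) := by
  have hp0 : p ≠ 0 := by positivity
  have hc : ∀ z, mulVec' A z = y → η ^ p < powSum p z := fun z hz =>
    not_le.1 fun hle => absurd (hηmin z hz) (not_lt.2 ((pnorm_le_iff hp hη z).2 hle))
  have hiff : ∀ x, (pnorm p x ≤ η ∧ ∀ z, pnorm p z ≤ η →
      norm2 (mulVec' A x - y) ≤ norm2 (mulVec' A z - y)) ↔ IsOpt p A y (η ^ p) x := by
    intro x
    simp only [pnorm_le_iff hp hη, norm2_le_iff, IsOpt]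
  obtain ⟨x, hx⟩ := exists_isOpt hp A y hη
  have hS := hx.powSum_eq hp hA hc
  refine ⟨x, (hiff x).2 hx, fun z hz => hx.unique hp hA hc ((hiff z).1 hz), ?_, ?_⟩
  · exact (Real.rpow_left_inj (pnorm_nonneg p x) hη.le hp0).1 ((pnorm_rpow hp x).trans hS)
  · obtain ⟨k, hk⟩ : ∃ k, x k ≠ 0 := by
      by_contra! hall
      have hpos : 0 < η ^ p := Real.rpow_pos_of_pos hη p
      simp [powSum, hall, Real.zero_rpow hp0] at hS
      linarith
    have hnk : p * Real.sign (x k) * |x k| ^ (p - 1) ≠ 0 :=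
      mul_ne_zero (mul_ne_zero hp0 (mt Real.sign_eq_zero_iff.1 hk))
        (Real.rpow_pos_of_pos (abs_pos.2 hk) _).ne'
    obtain ⟨μ, hμ0, hμ⟩ := exists_multiplier_of_halfspace (resGrad A y x)
      (fun i => p * Real.sign (x i) * |x i| ^ (p - 1)) (Function.ne_iff.2 ⟨k, hnk⟩)
      (fun d hd => hx.dot_nonneg d (hS ▸ eventually_powSum_le hp x d hd))
    have hμne : μ ≠ 0 := by
      rintro rfl
      have hxy := mulVec'_eq_of_resGrad_eq_zero hA fun i => by simpa using hμ i
      exact (hc x hxy).ne hS.symm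
    refine ⟨μ, ⟨lt_of_le_of_ne hμ0 hμne.symm, hμ⟩, ?_⟩
    rintro ν ⟨-, hν⟩
    have h1 : _ + _ = (0 : ℝ) := hμ k
    exact mul_right_cancel₀ hnk (add_left_cancel ((hν k).trans h1.symm))
end

section
/- Let f : ℝⁿ → ℝ be a function and W ⊆ ℝⁿ an open set whose complement Wᶜ has Lebesgue measure zero. Suppose f is continuously differentiable on W, and suppose that for every x ∈ W with f(x) = 0 the gradient ∇f(x) is nonzero. Then the zero set f⁻¹({0}) = {x ∈ ℝⁿ : f(x) = 0} has Lebesgue measure zero. -/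
/-!
On the zero set `Z = W ∩ f⁻¹(0)` derivatives relative to `Z` are not unique, so the identity map may
have a singular one. At `x ∈ Z` choose `v` with `f'(x) v = 1`. The map `y ↦ y - f(y) • v` agrees with
the identity on `Z` and has derivative `w ↦ w - f'(x)(w) • v` at `x`, which kills `v ≠ 0` and hence
has determinant zero. The easy case of Sard's theorem
(`addHaar_image_eq_zero_of_det_fderivWithin_eq_zero`) applied to the identity then says that
`Z = id '' Z` is null. Only differentiability of `f` at the points of `Z` matters; the implicit
function theorem is not needed.
-/

open MeasureTheory

/-- If `L ≠ 0` is the derivative of `f` at a point `x` of a set `s` on which `f` vanishes, then the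
identity has a singular derivative at `x` within `s`. -/
lemma exists_singular_hasFDerivWithinAt_id {E : Type*} [NormedAddCommGroup E] [NormedSpace ℝ E]
    [FiniteDimensional ℝ E] {f : E → ℝ} {L : E →L[ℝ] ℝ} {s : Set E} {x : E}
    (hf : HasFDerivAt f L x) (hL : L ≠ 0) (hx : x ∈ s) (hs : ∀ y ∈ s, f y = 0) :
    ∃ A : E →L[ℝ] E, HasFDerivWithinAt (fun y => y) A s x ∧ A.det = 0 := by
  obtain ⟨u, hu⟩ : ∃ u, L u ≠ 0 := by
    by_contra! h
    exact hL (ContinuousLinearMap.ext h)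
  let v : E := (L u)⁻¹ • u
  have hv : L v = 1 := by simp [v, hu]
  refine ⟨ContinuousLinearMap.id ℝ E - L.smulRight v, ?_, ?_⟩
  · have h := ((hasFDerivAt_id x).sub (hf.smul_const v)).hasFDerivWithinAt (s := s)
    exact h.congr (fun y hy => by simp [hs y hy]) (by simp [hs x hx])
  · by_contra hdet
    have hker : (ContinuousLinearMap.id ℝ E - L.smulRight v) v = 0 := by simp [hv]
    have hbot := LinearMap.ker_eq_bot.mpr
      (LinearMap.equivOfDetNeZero
        ((ContinuousLinearMap.id ℝ E - L.smulRight v : E →L[ℝ] E) : E →ₗ[ℝ] E) hdet).injective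
    have hv0 : v = 0 := LinearMap.ker_eq_bot'.mp hbot v hker
    simp [hv0] at hv

/-- If `f : ℝⁿ → ℝ` is continuously differentiable on an open set `W` whose complement
has Lebesgue measure zero, and the derivative of `f` is nonzero at every zero of `f`
inside `W`, then the zero set `{x : f x = 0}` has Lebesgue measure zero. -/
theorem measure_zero_of_zero_set {n : ℕ} (f : (Fin n → ℝ) → ℝ) (W : Set (Fin n → ℝ))
    (hWopen : IsOpen W) (hWc : volume Wᶜ = 0)
    (hf : ContDiffOn ℝ 1 f W)
    (hgrad : ∀ x ∈ W, f x = 0 → fderiv ℝ f x ≠ 0) :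
    volume {x | f x = 0} = 0 := by
  have hZ : volume ((fun y => y) '' (W ∩ {x | f x = 0})) = 0 := by
    have h : ∀ x ∈ W ∩ {x | f x = 0}, ∃ A : (Fin n → ℝ) →L[ℝ] (Fin n → ℝ),
        HasFDerivWithinAt (fun y => y) A (W ∩ {x | f x = 0}) x ∧ A.det = 0 := by
      intro x hx
      have hd : DifferentiableAt ℝ f x :=
        (hf.contDiffAt (hWopen.mem_nhds hx.1)).differentiableAt one_ne_zero
      exact exists_singular_hasFDerivWithinAt_id hd.hasFDerivAt (hgrad x hx.1 hx.2) hx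
        fun y hy => hy.2
    choose! A hA hdet using h
    exact addHaar_image_eq_zero_of_det_fderivWithin_eq_zero volume hA hdet
  rw [Set.image_id'] at hZ
  refine measure_mono_null (fun x hx => ?_) (measure_union_null hZ hWc)
  by_cases hxW : x ∈ W
  · exact Or.inl ⟨hxW, hx⟩
  · exact Or.inr hxW
end

section
/- Fix p ∈ (0, 1], γ ∈ (0, 1), and s ∈ ℕ with s ≥ 1, and for each N set m = ⌈γN⌉. Then for all sufficiently large N, there exists a nonempty open set U_A ⊆ ℝ^{m×N} such that for every A ∈ U_A and every s-sparse vector x̄ ∈ ℝ^N (i.e., |supp(x̄)| ≤ s), x̄ is the unique optimal solution of the problem min ‖x‖_p subject to Ax = A x̄; in particular, for any index set I with |I| ≤ s and any y in the range of A_{•I}, the optimal solution x* satisfies |supp(x*)| ≤ |I|. -/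
/-!
Sparse recovery follows from low coherence of the columns of `A`.

Put `G = AᵀA` and suppose `G j j > 4 s` and `|G j k| < 2` for all `j ≠ k`; this is an open condition
on `A`. If `A v = 0`, then `G v = 0`, and reading off the `j`-th row gives
`(2 s + 1) |v j| ≤ ‖v‖₁` (`kernel_coord_le`). Since `t ≤ t ^ p` on `[0, 1]` for `p ≤ 1`, normalizing
by the largest entry turns this into the strict `p`-null space property (`null_space_property`):
every set of at most `s` coordinates carries less than half of `∑ |v i| ^ p`. Subadditivity of
`t ↦ t ^ p` then gives unique recovery (`sum_rpow_lt_of_nsp`).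

A matrix in the open set is the incidence matrix of lines against points of a grid: the column
indexed by a pair `(a, b)` with `a, b < n` is the indicator function of the points `(x, a + b x)`,
`x < d`, where `d = 4 s + 1`. Each column has `d` ones and two distinct lines meet in at most one
point, so `G j j = d` and `0 ≤ G j k ≤ 1`. This uses `d (d + 1) n` rows for `n ^ 2` columns; with
`n ≈ √N` the number of rows is `O(√N)`, hence at most `γ N` for large `N`. Surplus rows are zero.
-/

open scoped BigOperators

/-- The vector `A_{•I} z ∈ ℝ^m`, where `A_{•I}` is the submatrix of `A` formed by the
columns indexed by `I`, and `z ∈ ℝ^{|I|}`. -/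
noncomputable def subMulVec {m N : ℕ} (A : Fin m → Fin N → ℝ) (I : Finset (Fin N))
    (z : {j // j ∈ I} → ℝ) : Fin m → ℝ :=
  fun i => ∑ j : {j // j ∈ I}, A i (j : Fin N) * z j

/-- Graphs of the lines `x ↦ a + b x` over `x < d`, with `a, b < n`: they have `d` points each and
pairwise meet in at most one point. -/
lemma exists_line_family {N m n d : ℕ} (hN : N ≤ n * n) (hm : d * (n * (d + 1)) ≤ m) :
    ∃ T : Fin N → Finset (Fin m), (∀ j, (T j).card = d) ∧
      ∀ j k, j ≠ k → (T j ∩ T k).card ≤ 1 := by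
  have hy : ∀ (j : Fin N) (x : Fin d), (j : ℕ) % n + j / n * x < n * (d + 1) := by
    intro j x
    have hj := j.2
    have hn : 0 < n := by
      rcases Nat.eq_zero_or_pos n with h | h
      · subst h; omega
      · exact h
    have h1 : (j : ℕ) % n < n := Nat.mod_lt _ hn
    have h2 : (j : ℕ) / n < n := Nat.div_lt_of_lt_mul (by omega)
    have h3 : (j : ℕ) / n * x ≤ n * d := Nat.mul_le_mul h2.le x.2.le
    rw [Nat.mul_add, Nat.mul_one]
    omega
  -- the grid point `(x, y)` is encoded as the row index `x * L + y`, where `y < L = n * (d + 1)`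
  let φ : Fin N → Fin d → Fin m := fun j x =>
    ⟨x * (n * (d + 1)) + ((j : ℕ) % n + j / n * x), by
      have h := hy j x
      have h2 : ((x : ℕ) + 1) * (n * (d + 1)) ≤ d * (n * (d + 1)) :=
        Nat.mul_le_mul_right _ x.2
      rw [Nat.add_mul, Nat.one_mul] at h2
      omega⟩
  have hφ : ∀ j k x w, φ j x = φ k w →
      x = w ∧ (j : ℕ) % n + j / n * x = (k : ℕ) % n + k / n * w := by
    intro j k x w h
    have h' : (x : ℕ) * (n * (d + 1)) + ((j : ℕ) % n + j / n * x) =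
        w * (n * (d + 1)) + ((k : ℕ) % n + k / n * w) := congrArg Fin.val h
    have hj := hy j x
    have hk := hy k w
    have hxw : (x : ℕ) = w := by
      have e1 : ((x : ℕ) * (n * (d + 1)) + ((j : ℕ) % n + j / n * x)) / (n * (d + 1)) = x := by
        rw [Nat.add_comm, Nat.add_mul_div_right _ _ (by omega), Nat.div_eq_of_lt hj, Nat.zero_add]
      have e2 : ((w : ℕ) * (n * (d + 1)) + ((k : ℕ) % n + k / n * w)) / (n * (d + 1)) = w := by
        rw [Nat.add_comm, Nat.add_mul_div_right _ _ (by omega), Nat.div_eq_of_lt hk, Nat.zero_add]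
      rw [← e1, ← e2, h']
    have hxw' := Fin.ext hxw
    subst hxw'
    exact ⟨rfl, by omega⟩
  refine ⟨fun j => Finset.univ.image (φ j), fun j => ?_, fun j k hjk => ?_⟩
  · rw [Finset.card_image_of_injective _ (fun x w h => (hφ j j x w h).1)]
    simp
  · rw [Finset.card_le_one]
    intro r hr t ht
    simp only [Finset.mem_inter, Finset.mem_image, Finset.mem_univ, true_and] at hr ht
    obtain ⟨⟨x, rfl⟩, ⟨x', hx'⟩⟩ := hr
    obtain ⟨⟨w, rfl⟩, ⟨w', hw'⟩⟩ := ht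
    obtain ⟨e1, h1⟩ := hφ _ _ _ _ hx'
    obtain ⟨e2, h2⟩ := hφ _ _ _ _ hw'
    subst e1 e2
    by_contra hne
    have hxw : (x' : ℤ) - (w' : ℤ) ≠ 0 := by
      intro h
      apply hne
      have : x' = w' := Fin.ext (by omega)
      rw [this]
    have hb : ((k : ℕ) / n : ℕ) = (j : ℕ) / n := by
      zify at h1 h2
      have : (((k : ℕ) : ℤ) / (n : ℤ) - ((j : ℕ) : ℤ) / n) * ((x' : ℤ) - w') = 0 := by
        linear_combination h1 - h2
      rcases mul_eq_zero.1 this with h | h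
      · zify; linarith
      · exact absurd h hxw
    have ha : (k : ℕ) % n = (j : ℕ) % n := by
      rw [hb] at h1; omega
    apply hjk
    apply Fin.ext
    rw [← Nat.div_add_mod (j : ℕ) n, ← Nat.div_add_mod (k : ℕ) n, ha, hb]

/-- The entries of the Gram matrix `AᵀA`. -/
def gram {m N : ℕ} (A : Fin m → Fin N → ℝ) (j k : Fin N) : ℝ := ∑ i, A i j * A i k

/-- The matrices whose columns have squared length above `4 s` and pairwise inner products
below `2` in absolute value. -/
def lowCoherence (m N s : ℕ) : Set (Fin m → Fin N → ℝ) :=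
  {A | ∀ j, 4 * (s : ℝ) < gram A j j ∧ ∀ k, j ≠ k → |gram A j k| < 2}

lemma isOpen_lowCoherence (m N s : ℕ) : IsOpen (lowCoherence m N s) := by
  have hc : ∀ j k, Continuous fun A : Fin m → Fin N → ℝ => gram A j k := by
    intro j k
    unfold gram
    fun_prop
  simp only [lowCoherence, Set.ofPred_forall, Set.ofPred_and]
  refine isOpen_iInter_of_finite fun j => (isOpen_lt continuous_const (hc j j)).inter
    (isOpen_iInter_of_finite fun k => isOpen_iInter_of_finite fun _ =>
      isOpen_lt (hc j k).abs continuous_const)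

lemma lowCoherence_nonempty {N m n s : ℕ} (hN : N ≤ n * n)
    (hm : (4 * s + 1) * (n * (4 * s + 1 + 1)) ≤ m) : (lowCoherence m N s).Nonempty := by
  obtain ⟨T, hT, hT'⟩ := exists_line_family hN hm
  have hg : ∀ j k, gram (fun i j => if i ∈ T j then (1 : ℝ) else 0) j k
      = ((T j ∩ T k).card : ℝ) := by
    intro j k
    simp [gram, ← ite_and, ← Finset.mem_inter, Finset.inter_comm]
  refine ⟨fun i j => if i ∈ T j then (1 : ℝ) else 0, fun j => ⟨?_, fun k hjk => ?_⟩⟩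
  · rw [hg, Finset.inter_self, hT]
    push_cast
    linarith
  · rw [hg, abs_of_nonneg (Nat.cast_nonneg _)]
    have : ((T j ∩ T k).card : ℝ) ≤ 1 := by exact_mod_cast hT' j k hjk
    linarith

lemma kernel_coord_le {m N s : ℕ} {A : Fin m → Fin N → ℝ} (hA : A ∈ lowCoherence m N s)
    {v : Fin N → ℝ} (hv : mulVec' A v = 0) (j : Fin N) :
    (2 * (s : ℝ) + 1) * |v j| ≤ ∑ k, |v k| := by
  have h0 : ∑ k, gram A j k * v k = 0 := by
    have h1 : ∑ k, gram A j k * v k = ∑ i, A i j * mulVec' A v i := by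
      simp only [gram, mulVec', Finset.sum_mul, Finset.mul_sum]
      rw [Finset.sum_comm]
      simp only [mul_assoc]
    rw [h1, hv]
    simp
  rw [← Finset.add_sum_erase _ _ (Finset.mem_univ j)] at h0
  rw [← Finset.add_sum_erase _ _ (Finset.mem_univ j)]
  have h2 : |∑ k ∈ Finset.univ.erase j, gram A j k * v k|
      ≤ 2 * ∑ k ∈ Finset.univ.erase j, |v k| := by
    rw [Finset.mul_sum]
    refine (Finset.abs_sum_le_sum_abs _ _).trans (Finset.sum_le_sum fun k hk => ?_)
    rw [abs_mul]
    exact mul_le_mul_of_nonneg_right ((hA j).2 k (Finset.ne_of_mem_erase hk).symm).le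
      (abs_nonneg _)
  have h3 : gram A j j * |v j| = |∑ k ∈ Finset.univ.erase j, gram A j k * v k| := by
    have hpos : 0 < gram A j j := lt_of_le_of_lt (by positivity) (hA j).1
    rw [← abs_neg (∑ k ∈ _, _), ← eq_neg_of_add_eq_zero_left h0, abs_mul, abs_of_pos hpos]
  have h4 := mul_le_mul_of_nonneg_right (hA j).1.le (abs_nonneg (v j))
  linarith

/-- If each entry of `v` carries at most the fraction `1 / (2 s + 1)` of the `1`-norm, then each set
of at most `s` entries carries less than half of `∑ |v i| ^ p`. -/
lemma null_space_property {N s : ℕ} {p : ℝ} (hp0 : 0 < p) (hp1 : p ≤ 1) {v : Fin N → ℝ}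
    (hv0 : v ≠ 0) (hv : ∀ j, (2 * (s : ℝ) + 1) * |v j| ≤ ∑ k, |v k|)
    {S : Finset (Fin N)} (hS : S.card ≤ s) :
    2 * ∑ i ∈ S, |v i| ^ p < ∑ i, |v i| ^ p := by
  obtain ⟨j₀, hj₀⟩ := Function.ne_iff.1 hv0
  obtain ⟨j, -, hj⟩ := Finset.exists_max_image Finset.univ (fun i => |v i|) ⟨j₀, Finset.mem_univ _⟩
  have hM : 0 < |v j| := lt_of_lt_of_le (abs_pos.2 hj₀) (hj j₀ (Finset.mem_univ _))
  have hMp : 0 < |v j| ^ p := Real.rpow_pos_of_pos hM p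
  have h1 : ∑ i ∈ S, |v i| ^ p ≤ s * |v j| ^ p := by
    calc ∑ i ∈ S, |v i| ^ p ≤ ∑ i ∈ S, |v j| ^ p := Finset.sum_le_sum fun i _ =>
          Real.rpow_le_rpow (abs_nonneg _) (hj i (Finset.mem_univ _)) hp0.le
      _ = S.card * |v j| ^ p := by simp
      _ ≤ s * |v j| ^ p := by gcongr
  have h2 : ∀ i, |v i| / |v j| * |v j| ^ p ≤ |v i| ^ p := by
    intro i
    have h := Real.self_le_rpow_of_le_one (div_nonneg (abs_nonneg (v i)) hM.le)
      ((div_le_one hM).2 (hj i (Finset.mem_univ _))) hp1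
    rw [Real.div_rpow (abs_nonneg _) hM.le, le_div_iff₀ hMp] at h
    exact h
  have h3 : (2 * (s : ℝ) + 1) * |v j| ^ p ≤ ∑ i, |v i| ^ p := by
    refine le_trans ?_ (Finset.sum_le_sum fun i _ => h2 i)
    rw [← Finset.sum_mul, ← Finset.sum_div]
    gcongr
    rw [le_div_iff₀ hM]
    exact hv j
  linarith

/-- A vector supported in `S` strictly beats every other vector whose difference `v` from it carries
less than half of its mass on `S`. -/
lemma sum_rpow_lt_of_nsp {N : ℕ} {p : ℝ} (hp0 : 0 < p) (hp1 : p ≤ 1) {x v : Fin N → ℝ}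
    {S : Finset (Fin N)} (hx : ∀ i ∉ S, x i = 0)
    (hv : 2 * ∑ i ∈ S, |v i| ^ p < ∑ i, |v i| ^ p) :
    ∑ i, |x i| ^ p < ∑ i, |x i + v i| ^ p := by
  rw [← Finset.sum_add_sum_compl S] at hv
  rw [← Finset.sum_add_sum_compl S, ← Finset.sum_add_sum_compl S (fun i => |x i + v i| ^ p)]
  have h1 : ∑ i ∈ Sᶜ, |x i| ^ p = 0 := Finset.sum_eq_zero fun i hi => by
    rw [hx i (Finset.mem_compl.1 hi), abs_zero, Real.zero_rpow hp0.ne']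
  have h2 : ∑ i ∈ Sᶜ, |x i + v i| ^ p = ∑ i ∈ Sᶜ, |v i| ^ p :=
    Finset.sum_congr rfl fun i hi => by rw [hx i (Finset.mem_compl.1 hi), zero_add]
  have h3 : ∑ i ∈ S, |x i| ^ p ≤ ∑ i ∈ S, |x i + v i| ^ p + ∑ i ∈ S, |v i| ^ p := by
    rw [← Finset.sum_add_distrib]
    refine Finset.sum_le_sum fun i _ => ?_
    refine le_trans ?_ (Real.rpow_add_le_add_rpow (abs_nonneg _) (abs_nonneg _) hp0.le hp1)
    refine Real.rpow_le_rpow (abs_nonneg _) ?_ hp0.le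
    calc |x i| = |(x i + v i) - v i| := by rw [add_sub_cancel_right]
      _ ≤ |x i + v i| + |v i| := abs_sub _ _
  linarith

lemma pnorm_lt_of_lowCoherence {m N s : ℕ} {p : ℝ} (hp0 : 0 < p) (hp1 : p ≤ 1)
    {A : Fin m → Fin N → ℝ} (hA : A ∈ lowCoherence m N s) {xbar x : Fin N → ℝ}
    (hs : suppCard xbar ≤ s) (hx : mulVec' A x = mulVec' A xbar) (hne : x ≠ xbar) :
    pnorm p xbar < pnorm p x := by
  have hker : mulVec' A (x - xbar) = 0 := by
    funext i
    have h := congrFun hx i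
    simp only [mulVec', Pi.sub_apply, mul_sub, Finset.sum_sub_distrib, Pi.zero_apply] at h ⊢
    linarith
  have h := sum_rpow_lt_of_nsp hp0 hp1 (x := xbar) (by simp)
    (null_space_property hp0 hp1 (sub_ne_zero.2 hne) (kernel_coord_le hA hker) hs)
  simp only [Pi.sub_apply, add_sub_cancel] at h
  exact Real.rpow_lt_rpow (Finset.sum_nonneg fun i _ => Real.rpow_nonneg (abs_nonneg _) _) h
    (by positivity)

/-- The line construction with `n = ⌊√N⌋ + 1` uses `O(√N)` rows. -/
lemma eventually_enough_rows (γ : ℝ) (hγ0 : 0 < γ) (C : ℕ) :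
    ∃ N₀ : ℕ, ∀ N : ℕ, N₀ ≤ N → C * (N.sqrt + 1) ≤ ⌈γ * (N : ℝ)⌉₊ := by
  -- the square root `r` of `N` must satisfy `2 C ≤ γ r` and `1 ≤ r`
  set K := ⌈2 * (C : ℝ) / γ⌉₊ + 1 with hK
  refine ⟨K * K, fun N hN => ?_⟩
  have hr : K ≤ N.sqrt := Nat.le_sqrt.2 hN
  have hKr : 2 * (C : ℝ) / γ ≤ N.sqrt := by
    refine (Nat.le_ceil _).trans ?_
    exact_mod_cast (by omega : ⌈2 * (C : ℝ) / γ⌉₊ ≤ N.sqrt)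
  rw [div_le_iff₀ hγ0] at hKr
  have h1 : (1 : ℝ) ≤ N.sqrt := by exact_mod_cast (by omega : 1 ≤ N.sqrt)
  have h2 : (N.sqrt : ℝ) * N.sqrt ≤ N := by exact_mod_cast Nat.sqrt_le N
  have h3 : ((C * (N.sqrt + 1) : ℕ) : ℝ) ≤ γ * N := by
    push_cast
    calc (C : ℝ) * (N.sqrt + 1) ≤ C * (N.sqrt + N.sqrt) := by gcongr
      _ = 2 * C * N.sqrt := by ring
      _ ≤ N.sqrt * γ * N.sqrt := by gcongr
      _ = γ * (N.sqrt * N.sqrt) := by ring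
      _ ≤ γ * N := by gcongr
  exact_mod_cast h3.trans (Nat.le_ceil _)

/-- Exact sparse recovery by `ℓ_p`-minimization with `0 < p ≤ 1` on a non-null (open)
set of matrices: fix `p ∈ (0,1]`, `γ ∈ (0,1)`, `s ≥ 1`, and set `m = ⌈γN⌉`. For all
sufficiently large `N` there is a nonempty open set `U_A ⊆ ℝ^{m×N}` such that for every
`A ∈ U_A`, every `s`-sparse vector `x̄` is the unique optimal solution of
`min ‖x‖_p s.t. Ax = A x̄`; in particular, for every index set `I` with `|I| ≤ s` and
every `y` in the range of `A_{•I}`, any optimal solution `x*` satisfies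
`|supp(x*)| ≤ |I|`. -/
theorem sparse_recovery_p_le_one (p γ : ℝ) (hp0 : 0 < p) (hp1 : p ≤ 1)
    (hγ0 : 0 < γ) (hγ1 : γ < 1) (s : ℕ) (hs : 1 ≤ s) :
    ∃ N₀ : ℕ, ∀ N : ℕ, N₀ ≤ N →
      ∃ U : Set (Fin ⌈γ * (N : ℝ)⌉₊ → Fin N → ℝ), U.Nonempty ∧ IsOpen U ∧
        ∀ A ∈ U,
          -- every s-sparse vector is the unique optimal solution of basis pursuit
          (∀ xbar : Fin N → ℝ, suppCard xbar ≤ s →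
            (∀ x, mulVec' A x = mulVec' A xbar → pnorm p xbar ≤ pnorm p x) ∧
            (∀ x, mulVec' A x = mulVec' A xbar → x ≠ xbar → pnorm p xbar < pnorm p x)) ∧
          -- in particular: sparse measurement vectors yield sparse optimal solutions
          (∀ I : Finset (Fin N), I.card ≤ s → ∀ z : {j // j ∈ I} → ℝ,
            ∀ x' : Fin N → ℝ,
              (mulVec' A x' = subMulVec A I z ∧
                ∀ x, mulVec' A x = subMulVec A I z → pnorm p x' ≤ pnorm p x) →
              suppCard x' ≤ I.card) := by
  obtain ⟨N₀, hN₀⟩ := eventually_enough_rows γ hγ0 ((4 * s + 1) * (4 * s + 1 + 1))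
  refine ⟨N₀, fun N hN => ⟨lowCoherence _ N s, ?_, isOpen_lowCoherence _ _ _, fun A hA => ?_⟩⟩
  · refine lowCoherence_nonempty (n := N.sqrt + 1) (Nat.lt_succ_sqrt N).le
      (le_trans (le_of_eq ?_) (hN₀ N hN))
    ring
  · refine ⟨fun xbar hxbar => ⟨fun x hx => ?_, fun x hx hne => ?_⟩, ?_⟩
    · rcases eq_or_ne x xbar with rfl | hne
      · exact le_rfl
      · exact (pnorm_lt_of_lowCoherence hp0 hp1 hA hxbar hx hne).le
    · exact pnorm_lt_of_lowCoherence hp0 hp1 hA hxbar hx hne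
    · rintro I hI z x' ⟨hx', hopt⟩
      -- the extension of `z` by zero is feasible and sparse, hence the only optimal solution
      let xbar : Fin N → ℝ := fun j => if h : j ∈ I then z ⟨j, h⟩ else 0
      have hfeas : mulVec' A xbar = subMulVec A I z := by
        funext i
        simp only [mulVec', subMulVec]
        rw [← Finset.sum_subset (Finset.subset_univ I)
          (fun j _ hj => by simp [xbar, hj]), ← Finset.sum_coe_sort]
        exact Finset.sum_congr rfl fun j _ => by simp [xbar]
      have hsupp : suppCard xbar ≤ I.card := by
        refine Finset.card_le_card fun j hj => ?_
        by_contra hjI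
        simp [xbar, hjI] at hj
      by_cases hne : x' = xbar
      · rw [hne]
        exact hsupp
      · exact absurd (hopt xbar hfeas) (not_le.2
          (pnorm_lt_of_lowCoherence hp0 hp1 hA (hsupp.trans hI) (hx'.trans hfeas.symm) hne))
end
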